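/- arXiv:1308.0833 — 8 statements merged into one kernel-verified Lean document; each statement's English description precedes it below -/
import Mathlib

section
/- Let m, n be positive integers, and let ℋ be a nonempty finite universal class of hash functions from [m] to [n²]. Then for every set S ⊆ [m] with |S| ≤ n, the fraction of functions h ∈ ℋ that have a collision on S (i.e., for which there exist distinct i, j ∈ S with h(i) = h(j)) is strictly less than 1/2. -/
/-!
Each function with a collision on `S` identifies at least two ordered pairs of distinct elements
of `S`, namely `(i, j)` and `(j, i)`. Double counting incidences between functions and ordered pairs
therefore bounds the fraction of functions with a collision by `(|S| choose 2) * ε` when every pair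
collides with probability at most `ε`. For `|S| ≤ n` and `ε = 1 / n²` this is at most
`(n - 1) / (2 * n)`.
-/

open Finset

variable {α β 𝕜 : Type*} [DecidableEq β]

/-- An `ε`-almost universal class of hash functions: two distinct keys collide under at most a
fraction `ε` of the functions of `H`. A universal class with values in `[k]` is the case
`ε = 1 / k`; keeping `ε` as a parameter allows arbitrary types of keys and of values. -/
def IsAlmostUniversal [Field 𝕜] [LE 𝕜] (H : Finset (α → β)) (ε : 𝕜) : Prop :=
  ∀ i j : α, i ≠ j → (#{h ∈ H | h i = h j} : 𝕜) / #H ≤ ε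

/-- The hash function `h` maps two distinct keys of `S` to the same value, so that it cannot be used
as a perfect hash function for `S`. -/
def HasCollisionOn (h : α → β) (S : Finset α) : Prop :=
  ∃ i ∈ S, ∃ j ∈ S, i ≠ j ∧ h i = h j

theorem HasCollisionOn.two_le_card_filter_offDiag {h : α → β} {S : Finset α}
    (hcol : HasCollisionOn h S) :
    2 ≤ #{p ∈ S.offDiag | h p.1 = h p.2} := by
  obtain ⟨i, hi, j, hj, hij, heq⟩ := hcol
  have hmem : (i, j) ∈ S.offDiag.filter (fun p => h p.1 = h p.2) := by
    simp [hi, hj, hij, heq]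
  have hmem_swap : (j, i) ∈ S.offDiag.filter (fun p => h p.1 = h p.2) := by
    simp [hi, hj, hij.symm, heq]
  exact one_lt_card.2 ⟨_, hmem, _, hmem_swap, fun h' => hij (congrArg Prod.fst h')⟩

variable [DecidableEq α]

instance (h : α → β) (S : Finset α) : Decidable (HasCollisionOn h S) :=
  inferInstanceAs (Decidable (∃ i ∈ S, ∃ j ∈ S, i ≠ j ∧ h i = h j))

namespace IsAlmostUniversal

variable [Field 𝕜] [LinearOrder 𝕜] [IsStrictOrderedRing 𝕜] {H : Finset (α → β)} {ε : 𝕜}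

theorem card_filter_hasCollisionOn_mul_two_le (hH : IsAlmostUniversal H ε) (hne : H.Nonempty)
    (S : Finset α) :
    (#{h ∈ H | HasCollisionOn h S} : 𝕜) * 2 ≤ #S.offDiag * (ε * #H) := by
  have hpos : (0 : 𝕜) < #H := by exact_mod_cast hne.card_pos
  simp only [← nsmul_eq_mul]
  refine card_nsmul_le_card_nsmul (fun h p => h p.1 = h p.2) (fun h hh => ?_) (fun p hp => ?_)
  · exact_mod_cast (mem_filter.1 hh).2.two_le_card_filter_offDiag
  · calc (#{h ∈ {h ∈ H | HasCollisionOn h S} | h p.1 = h p.2} : 𝕜)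
        ≤ #{h ∈ H | h p.1 = h p.2} := by
          gcongr
          exact filter_subset _ _
      _ ≤ ε * #H := (div_le_iff₀ hpos).1 (hH p.1 p.2 (mem_offDiag.1 hp).2.2)

theorem card_filter_hasCollisionOn_div_card_le (hH : IsAlmostUniversal H ε) (hne : H.Nonempty)
    (S : Finset α) :
    (#{h ∈ H | HasCollisionOn h S} : 𝕜) / #H ≤ (#S).choose 2 * ε := by
  have hpos : (0 : 𝕜) < #H := by exact_mod_cast hne.card_pos
  have hoffDiag : (#S.offDiag : 𝕜) = (#S).choose 2 * 2 := by
    rw [offDiag_card, Nat.cast_sub (Nat.le_mul_self _), Nat.cast_mul, Nat.cast_choose_two]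
    ring
  have hcount := hH.card_filter_hasCollisionOn_mul_two_le hne S
  rw [hoffDiag] at hcount
  rw [div_le_iff₀ hpos]
  linarith

end IsAlmostUniversal

theorem choose_two_mul_one_div_sq_lt_half [Field 𝕜] [LinearOrder 𝕜] [IsStrictOrderedRing 𝕜]
    {k n : ℕ} (hn : 0 < n) (hk : k ≤ n) : (k.choose 2 : 𝕜) * (1 / (n : 𝕜) ^ 2) < 1 / 2 := by
  have hpos : (0 : 𝕜) < n := by exact_mod_cast hn
  calc (k.choose 2 : 𝕜) * (1 / (n : 𝕜) ^ 2)
      ≤ n.choose 2 * (1 / (n : 𝕜) ^ 2) := by gcongr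
    _ = (1 - 1 / (n : 𝕜)) / 2 := by
      rw [Nat.cast_choose_two]
      field_simp
    _ < 1 / 2 := by
      gcongr
      exact sub_lt_self 1 (one_div_pos.2 hpos)

theorem stmt0_general {n : ℕ} (hn : 0 < n) {H : Finset (α → β)} (hne : H.Nonempty)
    (huniv : IsAlmostUniversal H (1 / n ^ 2 : ℚ)) {S : Finset α} (hS : #S ≤ n) :
    (#{h ∈ H | HasCollisionOn h S} : ℚ) / #H < 1 / 2 :=
  (huniv.card_filter_hasCollisionOn_div_card_le hne S).trans_lt
    (choose_two_mul_one_div_sq_lt_half hn hS)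

/-- If `H` is a nonempty finite universal class of hash functions from
`[m]` to `[n²]` (i.e. for any two distinct `i j : Fin m`, the fraction of `h ∈ H`
with `h i = h j` is at most `1/n²`), then for every `S ⊆ [m]` with `|S| ≤ n`,
the fraction of `h ∈ H` having a collision on `S` is strictly less than `1/2`. -/
theorem stmt0 (m n : ℕ) (hm : 0 < m) (hn : 0 < n)
    (H : Finset (Fin m → Fin (n ^ 2))) (hne : H.Nonempty)
    (huniv : ∀ i j : Fin m, i ≠ j →
      ((H.filter (fun h => h i = h j)).card : ℚ) / H.card ≤ 1 / (n ^ 2))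
    (S : Finset (Fin m)) (hS : S.card ≤ n) :
    ((H.filter (fun h => ∃ i ∈ S, ∃ j ∈ S, i ≠ j ∧ h i = h j)).card : ℚ) / H.card
      < 1 / 2 := by
  -- The two filters decide the collision predicate by different instances.
  convert stmt0_general hn hne huniv hS
  rfl
end

section
/- Let m, n be positive integers, let ℋ be a nonempty finite universal class of hash functions from [m] to [n], and let S ⊆ [m] be a set of size exactly n. For h ∈ ℋ and i ∈ [n], let N_i(h) = #{j ∈ S : h(j) = i}. Then the average over h ∈ ℋ of Σ_{i∈[n]} N_i(h)² is strictly less than 2n; that is, (1/#ℋ) · Σ_{h∈ℋ} Σ_{i∈[n]} N_i(h)² < 2n. -/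
/-!
`Σ_i N_i(h)²` counts the ordered pairs of elements of `S` that collide under `h`: the `#S` diagonal
pairs, which always do, and the `#S (#S - 1)` off-diagonal ones, each of which collides for at most
a fraction `ε = 1 / n` of the `h`. Double counting bounds the average by `#S + #S (#S - 1) ε`, and
whenever `ε #S ≤ 1` this is at most `2 #S - 1`.
-/

open Finset

variable {κ α β 𝕜 : Type*} [DecidableEq β]

theorem sum_card_fiber_sq {f : α → β} {s : Finset α} {t : Finset β} (hf : Set.MapsTo f s t) :
    ∑ i ∈ t, #{a ∈ s | f a = i} ^ 2 = #{p ∈ s ×ˢ s | f p.1 = f p.2} := by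
  have hmaps : Set.MapsTo (fun p : α × α ↦ f p.1) ↑{p ∈ s ×ˢ s | f p.1 = f p.2} t := by
    intro p hp
    exact hf (mem_product.mp (mem_filter.mp hp).1).1
  rw [card_eq_sum_card_fiberwise hmaps]
  refine sum_congr rfl fun i _ ↦ ?_
  rw [sq, ← card_product, ← filter_product, filter_filter]
  congr 1
  grind

theorem card_filter_product_self_eq_add_offDiag (f : α → β) (s : Finset α) :
    #{p ∈ s ×ˢ s | f p.1 = f p.2} = #s + #{p ∈ s.offDiag | f p.1 = f p.2} := by
  classical
  have hdiag : {p ∈ s.diag | f p.1 = f p.2} = s.diag :=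
    filter_true_of_mem fun p hp ↦ congrArg f (mem_diag.mp hp).2
  rw [← diag_union_offDiag, filter_union,
    card_union_of_disjoint (disjoint_filter_filter (disjoint_diag_offDiag s)), hdiag, diag_card]

section AlmostUniversal

variable [Field 𝕜] [LinearOrder 𝕜]

/-- The family `hash k`, `k ∈ K`, of hash functions is `ε`-almost universal on `s`: any two distinct
elements of `s` collide under at most a fraction `ε` of the family. A universal class of functions
into `β` is the case `ε = 1 / #β`. Indexing by keys `k` allows a function to occur repeatedly. -/
def IsAlmostUniversalOn (K : Finset κ) (hash : κ → α → β) (ε : 𝕜) (s : Set α) : Prop :=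
  s.Pairwise fun a b ↦ (#{k ∈ K | hash k a = hash k b} : 𝕜) / #K ≤ ε

variable [IsStrictOrderedRing 𝕜] {K : Finset κ} {hash : κ → α → β} {ε : 𝕜} {s : Finset α}

theorem IsAlmostUniversalOn.sum_card_offDiag_collisions_le
    (h : IsAlmostUniversalOn K hash ε (s : Set α)) (hK : K.Nonempty) :
    ∑ k ∈ K, (#{p ∈ s.offDiag | hash k p.1 = hash k p.2} : 𝕜) ≤ #s * (#s - 1) * ε * #K := by
  have hK_pos : (0 : 𝕜) < #K := mod_cast hK.card_pos
  have hpair : ∀ p ∈ s.offDiag, (#{k ∈ K | hash k p.1 = hash k p.2} : 𝕜) ≤ ε * #K := by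
    intro p hp
    obtain ⟨ha, hb, hab⟩ := mem_offDiag.mp hp
    exact (div_le_iff₀ hK_pos).mp (h ha hb hab)
  have hcard : (#s.offDiag : 𝕜) = #s * (#s - 1) := by
    rw [offDiag_card, Nat.cast_sub (Nat.le_mul_self _), Nat.cast_mul]
    ring
  calc ∑ k ∈ K, (#{p ∈ s.offDiag | hash k p.1 = hash k p.2} : 𝕜)
      = ∑ p ∈ s.offDiag, (#{k ∈ K | hash k p.1 = hash k p.2} : 𝕜) := mod_cast
        sum_card_bipartiteAbove_eq_sum_card_bipartiteBelow
          fun k (p : α × α) ↦ hash k p.1 = hash k p.2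
    _ ≤ #s.offDiag • (ε * #K) := sum_le_card_nsmul _ _ _ hpair
    _ = #s * (#s - 1) * ε * #K := by rw [nsmul_eq_mul, hcard, mul_assoc _ ε]

variable [Fintype β]

theorem IsAlmostUniversalOn.average_sum_card_fiber_sq_le
    (h : IsAlmostUniversalOn K hash ε (s : Set α)) (hK : K.Nonempty) :
    (∑ k ∈ K, ∑ i, (#{a ∈ s | hash k a = i} : 𝕜) ^ 2) / #K ≤ #s + #s * (#s - 1) * ε := by
  have hfiber (k : κ) : ∑ i, (#{a ∈ s | hash k a = i} : 𝕜) ^ 2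
      = #s + #{p ∈ s.offDiag | hash k p.1 = hash k p.2} := mod_cast
    (sum_card_fiber_sq fun a _ ↦ mem_univ (hash k a)).trans
      (card_filter_product_self_eq_add_offDiag (hash k) s)
  have hK_pos : (0 : 𝕜) < #K := mod_cast hK.card_pos
  rw [div_le_iff₀ hK_pos]
  calc ∑ k ∈ K, ∑ i, (#{a ∈ s | hash k a = i} : 𝕜) ^ 2
      = #K * #s + ∑ k ∈ K, (#{p ∈ s.offDiag | hash k p.1 = hash k p.2} : 𝕜) := by
        simp only [hfiber, sum_add_distrib, sum_const, nsmul_eq_mul]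
    _ ≤ #K * #s + #s * (#s - 1) * ε * #K := by
        gcongr
        exact h.sum_card_offDiag_collisions_le hK
    _ = (#s + #s * (#s - 1) * ε) * #K := by ring

theorem stmt2_general (hK : K.Nonempty) (hs : s.Nonempty)
    (h : IsAlmostUniversalOn K hash ε (s : Set α)) (hε : ε * #s ≤ 1) :
    (∑ k ∈ K, ∑ i, (#{a ∈ s | hash k a = i} : 𝕜) ^ 2) / #K < 2 * #s := by
  have hs_sub : (0 : 𝕜) ≤ #s - 1 := sub_nonneg.mpr (mod_cast hs.card_pos)
  calc (∑ k ∈ K, ∑ i, (#{a ∈ s | hash k a = i} : 𝕜) ^ 2) / #K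
      ≤ #s + #s * (#s - 1) * ε := h.average_sum_card_fiber_sq_le hK
    _ = #s + (#s - 1) * (ε * #s) := by ring
    _ ≤ #s + (#s - 1) := by gcongr; exact mul_le_of_le_one_right hs_sub hε
    _ < 2 * #s := by linarith

end AlmostUniversal

/-- Let `H` be a nonempty finite universal class of hash functions
from `[m]` to `[n]` and `S ⊆ [m]` of size exactly `n`.  For `h ∈ H` and `i ∈ [n]`
let `N_i(h) = #{j ∈ S : h j = i}`.  Then the average over `h ∈ H` of
`Σ_{i∈[n]} N_i(h)²` is strictly less than `2n`. -/
theorem stmt2 (m n : ℕ) (hm : 0 < m) (hn : 0 < n)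
    (H : Finset (Fin m → Fin n)) (hne : H.Nonempty)
    (huniv : ∀ i j : Fin m, i ≠ j →
      ((H.filter (fun h => h i = h j)).card : ℚ) / H.card ≤ 1 / n)
    (S : Finset (Fin m)) (hS : S.card = n) :
    ((∑ h ∈ H, ∑ i : Fin n, ((S.filter (fun j => h j = i)).card ^ 2 : ℚ)) : ℚ)
        / H.card < 2 * n := by
  subst hS
  exact stmt2_general (hash := id) hne (card_pos.mp hn) (fun i _ j _ ↦ huniv i j)
    (one_div_mul_cancel (by positivity)).le
end

section
/- Let p be a prime and let n, m be positive integers with n² ≤ m ≤ p. Then for every set S ⊆ [m] with |S| ≤ n, there exists a unit a ∈ ℤ_p^* such that the function h_{p,m,n²,a} : [m] → [n²] is injective on S (i.e., h_{p,m,n²,a} has no collision on S). -/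
/-! If `x` and `y` collide under `a`, then `k` divides the least nonnegative residue of
`a * (x - y)` or of `a * (y - x)`. For an invertible difference `d`, multiplication by `d` permutes
the nonzero residues, so exactly `⌊(p - 1) / k⌋` of the multipliers `a ≠ 0` send `d` to a multiple
of `k`. With fewer than `k` differences, the union bound leaves a multiplier without any collision.
-/

open Finset

section Residues

variable {N : ℕ} [NeZero N]

lemma card_ne_zero_dvd_val (k : ℕ) :
    #{b : ZMod N | b ≠ 0 ∧ k ∣ b.val} = (N - 1) / k := by
  rw [← Nat.Ioc_filter_dvd_card_eq_div]
  refine card_nbij' ZMod.val (fun c ↦ (c : ZMod N)) ?_ ?_ ?_ ?_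
  · intro b hb
    obtain ⟨hb₀, hkb⟩ : b ≠ 0 ∧ k ∣ b.val := by simpa using hb
    have hbN := b.val_lt
    have hb_pos := ZMod.val_pos.mpr hb₀
    simpa [hkb, hb_pos] using Nat.le_sub_one_of_lt hbN
  · intro c hc
    obtain ⟨⟨hc_pos, hcN⟩, hkc⟩ : (0 < c ∧ c ≤ N - 1) ∧ k ∣ c := by simpa using hc
    have hval : (c : ZMod N).val = c := ZMod.val_natCast_of_lt (by lia)
    have hc₀ : (c : ZMod N) ≠ 0 := ZMod.val_pos.mp (hval.symm ▸ hc_pos)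
    simpa [hc₀, hval] using hkc
  · exact fun b _ ↦ ZMod.natCast_zmod_val b
  · intro c hc
    obtain ⟨⟨hc_pos, hcN⟩, -⟩ : (0 < c ∧ c ≤ N - 1) ∧ k ∣ c := by simpa using hc
    exact ZMod.val_natCast_of_lt (by lia)

lemma card_ne_zero_dvd_val_mul {d : ZMod N} (hd : IsUnit d) (k : ℕ) :
    #{a : ZMod N | a ≠ 0 ∧ k ∣ (a * d).val} = (N - 1) / k := by
  rw [← card_ne_zero_dvd_val (N := N) k]
  exact card_equiv hd.unit.mulRight fun a ↦ by simp [hd.mul_left_eq_zero]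

lemma exists_ne_zero_forall_not_dvd_val_mul (hN : 1 < N) {k : ℕ} {D : Finset (ZMod N)}
    (hD : ∀ d ∈ D, IsUnit d) (hk : #D < k) :
    ∃ a : ZMod N, a ≠ 0 ∧ ∀ d ∈ D, ¬ k ∣ (a * d).val := by
  by_contra! h
  have hcover : univ.erase 0 ⊆ D.biUnion fun d ↦ {a : ZMod N | a ≠ 0 ∧ k ∣ (a * d).val} := by
    intro a ha
    obtain ⟨d, hd, hkd⟩ := h a (ne_of_mem_erase ha)
    exact mem_biUnion.mpr ⟨d, hd, by simpa using ⟨ne_of_mem_erase ha, hkd⟩⟩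
  have hle : N - 1 ≤ #D * ((N - 1) / k) := calc
    N - 1 = #((univ : Finset (ZMod N)).erase 0) := by simp [ZMod.card]
    _ ≤ _ := card_le_card hcover
    _ ≤ #D * ((N - 1) / k) :=
      card_biUnion_le_card_mul _ _ _ fun d hd ↦ (card_ne_zero_dvd_val_mul (hD d hd) k).le
  have hquot : 0 < (N - 1) / k := Nat.pos_of_mul_pos_left (by lia : 0 < #D * ((N - 1) / k))
  have hlt : #D * ((N - 1) / k) < N - 1 := calc
    #D * ((N - 1) / k) < k * ((N - 1) / k) := Nat.mul_lt_mul_of_pos_right hk hquot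
    _ ≤ N - 1 := Nat.mul_div_le _ _
  exact hlt.not_ge hle

lemma dvd_val_sub_or_dvd_val_sub {k : ℕ} {u v : ZMod N} (h : u.val ≡ v.val [MOD k]) :
    k ∣ (u - v).val ∨ k ∣ (v - u).val := by
  rcases le_total u.val v.val with huv | hvu
  · exact .inr <| ZMod.val_sub huv ▸ (Nat.modEq_iff_dvd' huv).mp h
  · exact .inl <| ZMod.val_sub hvu ▸ (Nat.modEq_iff_dvd' hvu).mp h.symm

end Residues

lemma val_mul_natCast {N : ℕ} (a : ZMod N) (x : ℕ) : (a * x).val = a.val * x % N := by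
  simp [ZMod.val_mul, ZMod.val_natCast]

lemma isUnit_natCast_sub_of_prime {p x y : ℕ} (hp : p.Prime) (hx : x < p) (hy : y < p)
    (hxy : x ≠ y) : IsUnit ((x : ZMod p) - y) := by
  have : Fact p.Prime := ⟨hp⟩
  exact (sub_ne_zero.mpr ((CharP.natCast_injOn_Iio (ZMod p) p).ne hx hy hxy)).isUnit

lemma mul_sub_one_lt_sq_of_le {s n : ℕ} (hn : 0 < n) (hs : s ≤ n) : s * (s - 1) < n ^ 2 := calc
  s * (s - 1) ≤ n * (n - 1) := Nat.mul_le_mul hs (Nat.sub_le_sub_right hs 1)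
  _ < n * n := Nat.mul_lt_mul_of_pos_left (Nat.sub_one_lt_of_lt hn) hn
  _ = n ^ 2 := (sq n).symm

theorem stmt3_general {p k : ℕ} (hp : 1 < p) {S : Finset ℕ}
    (hS : ∀ x ∈ S, ∀ y ∈ S, x ≠ y → IsUnit ((x : ZMod p) - y)) (hk : #S * (#S - 1) < k) :
    ∃ a ∈ Ico 1 p, ∀ x ∈ S, ∀ y ∈ S, (a * x % p) % k = (a * y % p) % k → x = y := by
  have : NeZero p := ⟨by lia⟩
  let D : Finset (ZMod p) := S.offDiag.image fun q ↦ (q.1 : ZMod p) - q.2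
  have hD_mem {x y : ℕ} (hx : x ∈ S) (hy : y ∈ S) (hxy : x ≠ y) : (x : ZMod p) - y ∈ D :=
    mem_image_of_mem (fun q : ℕ × ℕ ↦ (q.1 : ZMod p) - q.2)
      (mem_offDiag.mpr ⟨hx, hy, hxy⟩ : (x, y) ∈ S.offDiag)
  have hD_unit : ∀ d ∈ D, IsUnit d := forall_mem_image.mpr fun q hq ↦ by
    obtain ⟨hx, hy, hxy⟩ := mem_offDiag.mp hq
    exact hS _ hx _ hy hxy
  have hD_card : #D < k := calc
    #D ≤ #S.offDiag := card_image_le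
    _ = #S * (#S - 1) := by rw [offDiag_card, Nat.mul_sub_one]
    _ < k := hk
  obtain ⟨a, ha, hak⟩ := exists_ne_zero_forall_not_dvd_val_mul hp hD_unit hD_card
  refine ⟨a.val, mem_Ico.mpr ⟨ZMod.val_pos.mpr ha, a.val_lt⟩, fun x hx y hy hcoll ↦ ?_⟩
  by_contra hxy
  rw [← val_mul_natCast, ← val_mul_natCast] at hcoll
  rcases dvd_val_sub_or_dvd_val_sub hcoll with hdvd | hdvd <;> rw [← mul_sub] at hdvd
  · exact hak _ (hD_mem hx hy hxy) hdvd
  · exact hak _ (hD_mem hy hx (Ne.symm hxy)) hdvd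

/-- Let `p` be a prime and `n, m` positive integers with `n² ≤ m ≤ p`.
For every `S ⊆ [m]` with `|S| ≤ n`, there exists a unit `a ∈ ℤ_p^*`
(represented as `1 ≤ a < p`) such that the hash function
`h_{p,m,n²,a}(x) = ((a·x) mod p) mod n²` is injective on `S`. -/
theorem stmt3 (p m n : ℕ) (hp : p.Prime) (hn : 0 < n) (hm : n ^ 2 ≤ m) (hmp : m ≤ p)
    (S : Finset ℕ) (hSm : S ⊆ Finset.range m) (hS : S.card ≤ n) :
    ∃ a ∈ Finset.Ico 1 p,
      ∀ x ∈ S, ∀ y ∈ S, (a * x % p) % n ^ 2 = (a * y % p) % n ^ 2 → x = y := by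
  have hlt : ∀ x ∈ S, x < p := fun x hx ↦ (mem_range.mp (hSm hx)).trans_le hmp
  exact stmt3_general hp.one_lt
    (fun x hx y hy ↦ isUnit_natCast_sub_of_prime hp (hlt x hx) (hlt y hy))
    (mul_sub_one_lt_sq_of_le hn hS)
end

section
/- Let A and B be n×m complex matrices with orthonormal columns, i.e. A*A = B*B = I_m where A* denotes the conjugate transpose, and suppose the discriminant matrix D = A*B is Hermitian. Let W = (2BB* − I_n)(2AA* − I_n). If θ is a real number with 0 < θ < π and cos θ is an eigenvalue of D, then both e^{2iθ} and e^{−2iθ} are eigenvalues of W; i.e., there exist nonzero vectors w₊, w₋ ∈ ℂ^n with W·w₊ = e^{2iθ}·w₊ and W·w₋ = e^{−2iθ}·w₋. -/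
open Matrix

/-!
Let `f`, `g` have left inverses `f'`, `g'`, and let `v` satisfy `f' (g v) = c • v = g' (f v)`. If
`2c = z + z⁻¹`, the reflection through the range of `f` sends `f v - z • g v` to
`z • (g v - z • f v)`, and the reflection through the range of `g` sends `g v - z • f v` back to
`z • (f v - z • g v)`. Hence `f v - z • g v` is an eigenvector of the product with eigenvalue `z²`,
nonzero as soon as `z² ≠ 1`. For `c = cos θ` the two choices of `z` are `exp (± iθ)`.
-/

open Module.End

section Reflection

variable {K V E : Type*} [CommRing K] [AddCommGroup V] [Module K V] [AddCommGroup E] [Module K E]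

/-- The operator `2 f f' - 1` on the codomain of `f`. When `f'` is a left inverse of `f`, this is
the (possibly oblique) reflection through the range of `f` along the kernel of `f'`; taking for `f`
an isometry and for `f'` its adjoint gives the orthogonal reflection of Szegedy's walk. -/
def rangeReflection (f : V →ₗ[K] E) (f' : E →ₗ[K] V) : Module.End K E :=
  (2 : K) • (f ∘ₗ f') - 1

theorem rangeReflection_apply (f : V →ₗ[K] E) (f' : E →ₗ[K] V) (x : E) :
    rangeReflection f f' x = (2 : K) • f (f' x) - x :=
  rfl

variable {f g : V →ₗ[K] E} {f' g' : E →ₗ[K] V} {c z : K} {v : V}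

theorem rangeReflection_sub_smul (hff : f' (f v) = v) (hfg : f' (g v) = c • v)
    (hz : z ^ 2 + 1 = 2 * c * z) :
    rangeReflection f f' (f v - z • g v) = z • (g v - z • f v) := by
  have hcoeff : 2 - 2 * (z * c) - 1 = -z ^ 2 := by linear_combination hz
  calc rangeReflection f f' (f v - z • g v)
      = (2 - 2 * (z * c) - 1) • f v + z • g v := by
        simp only [rangeReflection_apply, map_sub, map_smul, hff, hfg]
        module
    _ = z • (g v - z • f v) := by
        rw [hcoeff]
        module

theorem apply_sub_smul_apply_ne_zero [IsDomain K] [Module.IsTorsionFree K V]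
    (hff : f' (f v) = v) (hfg : f' (g v) = c • v) (hz : z ^ 2 + 1 = 2 * c * z)
    (hz1 : z ^ 2 ≠ 1) (hv : v ≠ 0) : f v - z • g v ≠ 0 := by
  intro h
  have hsmul : (1 - z * c) • v = 0 := by
    simpa [hff, hfg, sub_smul, mul_smul] using congrArg f' h
  have hzc : 1 - z * c = 0 := (smul_eq_zero_iff_left hv).mp hsmul
  exact hz1 (by linear_combination hz - 2 * hzc)

theorem hasEigenvector_rangeReflection_mul [IsDomain K] [Module.IsTorsionFree K V]
    (hff : f' (f v) = v) (hgg : g' (g v) = v) (hfg : f' (g v) = c • v) (hgf : g' (f v) = c • v)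
    (hz : z ^ 2 + 1 = 2 * c * z) (hz1 : z ^ 2 ≠ 1) (hv : v ≠ 0) :
    HasEigenvector (rangeReflection g g' * rangeReflection f f') (z ^ 2) (f v - z • g v) := by
  refine ⟨mem_eigenspace_iff.mpr ?_, apply_sub_smul_apply_ne_zero hff hfg hz hz1 hv⟩
  calc (rangeReflection g g' * rangeReflection f f') (f v - z • g v)
      = z • rangeReflection g g' (g v - z • f v) := by
        rw [Module.End.mul_apply, rangeReflection_sub_smul hff hfg hz, map_smul]
    _ = z ^ 2 • (f v - z • g v) := by
        rw [rangeReflection_sub_smul hgg hgf hz, smul_smul, sq]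

end Reflection

section ComplexSpace

open Complex

theorem exp_mul_I_sq_add_one (θ : ℂ) : exp (θ * I) ^ 2 + 1 = 2 * cos θ * exp (θ * I) := by
  rw [exp_mul_I]
  linear_combination sin θ ^ 2 * I_sq - sin_sq_add_cos_sq θ

theorem exp_mul_I_sq_sub_one (θ : ℂ) : exp (θ * I) ^ 2 - 1 = 2 * I * sin θ * exp (θ * I) := by
  rw [exp_mul_I]
  linear_combination sin_sq_add_cos_sq θ - sin θ ^ 2 * I_sq

theorem exp_mul_I_sq_ne_one {θ : ℂ} (hθ : sin θ ≠ 0) : exp (θ * I) ^ 2 ≠ 1 := by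
  rw [← sub_ne_zero, exp_mul_I_sq_sub_one]
  exact mul_ne_zero (mul_ne_zero (mul_ne_zero two_ne_zero I_ne_zero) hθ) (exp_ne_zero _)

variable {V E : Type*} [AddCommGroup V] [Module ℂ V] [AddCommGroup E] [Module ℂ E]

theorem hasEigenvalue_rangeReflection_mul_exp {f g : V →ₗ[ℂ] E} {f' g' : E →ₗ[ℂ] V} {θ : ℂ} {v : V}
    (hff : f' (f v) = v) (hgg : g' (g v) = v) (hfg : f' (g v) = cos θ • v)
    (hgf : g' (f v) = cos θ • v) (hθ : sin θ ≠ 0) (hv : v ≠ 0) :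
    HasEigenvalue (rangeReflection g g' * rangeReflection f f') (exp (2 * θ * I)) := by
  have hexp : exp (2 * θ * I) = exp (θ * I) ^ 2 := by
    rw [← exp_nat_mul, Nat.cast_ofNat, mul_assoc]
  rw [hexp]
  exact hasEigenvalue_of_hasEigenvector <| hasEigenvector_rangeReflection_mul hff hgg hfg hgf
    (exp_mul_I_sq_add_one θ) (exp_mul_I_sq_ne_one hθ) hv

theorem stmt8_general {f g : V →ₗ[ℂ] E} {f' g' : E →ₗ[ℂ] V}
    (hf : Function.LeftInverse f' f) (hg : Function.LeftInverse g' g)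
    {θ : ℂ} (hθ : sin θ ≠ 0) {v : V} (hv : v ≠ 0)
    (hfg : f' (g v) = cos θ • v) (hgf : g' (f v) = cos θ • v) :
    HasEigenvalue (rangeReflection g g' * rangeReflection f f') (exp (2 * θ * I)) ∧
      HasEigenvalue (rangeReflection g g' * rangeReflection f f') (exp (-(2 * θ * I))) := by
  refine ⟨hasEigenvalue_rangeReflection_mul_exp (hf v) (hg v) hfg hgf hθ hv, ?_⟩
  rw [← cos_neg] at hfg hgf
  rw [← neg_mul, ← mul_neg]
  exact hasEigenvalue_rangeReflection_mul_exp (hf v) (hg v) hfg hgf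
    (by rwa [sin_neg, neg_ne_zero]) hv

end ComplexSpace

section Matrix

variable {K m n : Type*} [CommRing K] [Fintype m] [Fintype n]

theorem leftInverse_mulVecLin [DecidableEq m] {A : Matrix n m K} {A' : Matrix m n K}
    (h : A' * A = 1) : Function.LeftInverse A'.mulVecLin A.mulVecLin := fun v ↦ by
  rw [mulVecLin_apply, mulVecLin_apply, mulVec_mulVec, h, one_mulVec]

theorem rangeReflection_mulVecLin [DecidableEq n] (A : Matrix n m K) (A' : Matrix m n K) :
    rangeReflection A.mulVecLin A'.mulVecLin = ((2 : K) • (A * A') - 1).mulVecLin :=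
  LinearMap.ext fun x ↦ by simp [rangeReflection_apply]

theorem exists_mulVec_eq_smul_of_hasEigenvalue {M : Matrix n n K} {μ : K}
    (h : HasEigenvalue M.mulVecLin μ) : ∃ w : n → K, w ≠ 0 ∧ M *ᵥ w = μ • w :=
  let ⟨w, hw⟩ := h.exists_hasEigenvector
  ⟨w, hw.2, hw.apply_eq_smul⟩

end Matrix

/-- Spectral Lemma, part 2: With `A, B` as in part 1
(`AᴴA = BᴴB = I`, `D = AᴴB` Hermitian) and
`W = (2BBᴴ − I)(2AAᴴ − I)`, if `0 < θ < π` and `cos θ` is an eigenvalue of `D`,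
then `e^{2iθ}` and `e^{−2iθ}` are eigenvalues of `W`. -/
theorem stmt8 (n m : ℕ) (A B : Matrix (Fin n) (Fin m) ℂ)
    (hA : Aᴴ * A = 1) (hB : Bᴴ * B = 1)
    (hD : (Aᴴ * B).IsHermitian)
    (θ : ℝ) (hθ0 : 0 < θ) (hθπ : θ < Real.pi)
    (v : Fin m → ℂ) (hv : v ≠ 0)
    (hev : (Aᴴ * B).mulVec v = (Real.cos θ : ℂ) • v) :
    (∃ w : Fin n → ℂ, w ≠ 0 ∧
        (((2 : ℂ) • (B * Bᴴ) - 1) * ((2 : ℂ) • (A * Aᴴ) - 1)).mulVec w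
          = Complex.exp (2 * θ * Complex.I) • w) ∧
      (∃ w : Fin n → ℂ, w ≠ 0 ∧
        (((2 : ℂ) • (B * Bᴴ) - 1) * ((2 : ℂ) • (A * Aᴴ) - 1)).mulVec w
          = Complex.exp (-(2 * θ * Complex.I)) • w) := by
  have hBA : Bᴴ * A = Aᴴ * B := by simpa using hD.eq
  have hsin : Complex.sin θ ≠ 0 := by
    exact_mod_cast (Real.sin_pos_of_pos_of_lt_pi hθ0 hθπ).ne'
  have h := stmt8_general (leftInverse_mulVecLin hA) (leftInverse_mulVecLin hB)
    hsin hv (by simpa using hev) (by simpa [hBA] using hev)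
  simp only [rangeReflection_mulVecLin, Module.End.mul_eq_comp, ← mulVecLin_mul] at h
  exact h.imp exists_mulVec_eq_smul_of_hasEigenvalue exists_mulVec_eq_smul_of_hasEigenvalue
end

section
/- Let A and B be n×m complex matrices with orthonormal columns, i.e. A*A = B*B = I_m where A* denotes the conjugate transpose, and suppose the discriminant matrix D = A*B is Hermitian. Let W = (2BB* − I_n)(2AA* − I_n). If v ∈ ℂ^n lies in the sum 𝒜 + ℬ of the column spaces 𝒜 of A and ℬ of B, and Wv = v, then v ∈ 𝒜 ∩ ℬ; equivalently, AA*v = v and BB*v = v. -/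
open Matrix

/-!
Since reflections are involutions, `W v = v` says that the reflections in `𝒜` and `ℬ` agree at `v`,
hence so do the orthogonal projections. The residual of `v` under this common projection is
orthogonal to both `𝒜` and `ℬ`, hence to `𝒜 + ℬ`; it also lies in `𝒜 + ℬ` as soon as `v` does,
so it vanishes.
-/

section Reflection

open Submodule

variable {𝕜 E : Type*} [RCLike 𝕜] [NormedAddCommGroup E] [InnerProductSpace 𝕜 E]
  {K L : Submodule 𝕜 E} [K.HasOrthogonalProjection] [L.HasOrthogonalProjection] {v : E}

theorem reflection_eq_reflection_iff :
    K.reflection v = L.reflection v ↔ K.starProjection v = L.starProjection v := by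
  have : IsAddTorsionFree E := .of_isTorsionFree 𝕜 E
  rw [reflection_apply, reflection_apply, sub_left_inj, nsmul_right_inj two_ne_zero]

theorem mem_inf_of_starProjection_eq_starProjection (hv : v ∈ K ⊔ L)
    (h : K.starProjection v = L.starProjection v) : v ∈ K ⊓ L := by
  have mem_sup : v - K.starProjection v ∈ K ⊔ L :=
    sub_mem hv (mem_sup_left (K.starProjection_apply_mem v))
  have mem_orthogonal : v - K.starProjection v ∈ (K ⊔ L)ᗮ := by
    rw [← inf_orthogonal]
    exact ⟨sub_starProjection_mem_orthogonal v, h ▸ sub_starProjection_mem_orthogonal v⟩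
  have hK : K.starProjection v = v :=
    (sub_eq_zero.mp (disjoint_def.mp (K ⊔ L).orthogonal_disjoint _ mem_sup mem_orthogonal)).symm
  exact ⟨starProjection_eq_self_iff.mp hK, starProjection_eq_self_iff.mp (h ▸ hK)⟩

theorem mem_inf_of_reflection_reflection_eq_self (hv : v ∈ K ⊔ L)
    (h : L.reflection (K.reflection v) = v) : v ∈ K ⊓ L :=
  mem_inf_of_starProjection_eq_starProjection hv <|
    reflection_eq_reflection_iff.mp (L.reflection_involutive.eq_iff.mp h)

end Reflection

section PartialIsometry

open LinearMap WithLp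

variable {𝕜 m n l : Type*} [RCLike 𝕜] [Fintype m] [Fintype n]
  {A : Matrix n m 𝕜}

theorem starProjection_range_toEuclideanLin [DecidableEq m] (hA : A * Aᴴ * A = A) (v : n → 𝕜) :
    (range A.toEuclideanLin).starProjection (toLp 2 v) = toLp 2 ((A * Aᴴ) *ᵥ v) := by
  classical
  refine Submodule.eq_starProjection_of_mem_orthogonal
    ⟨toLp 2 (Aᴴ *ᵥ v), by rw [toLpLin_toLp, toLin'_apply, mulVec_mulVec]⟩ ?_
  have hA' : Aᴴ * (A * Aᴴ) = Aᴴ := by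
    simpa only [conjTranspose_mul, conjTranspose_conjTranspose] using congrArg conjTranspose hA
  rw [orthogonal_range, ← toEuclideanLin_conjTranspose_eq_adjoint, mem_ker, ← toLp_sub,
    toLpLin_toLp, toLin'_apply, mulVec_sub, mulVec_mulVec, hA', sub_self, toLp_zero]

theorem reflection_range_toEuclideanLin [DecidableEq m] [DecidableEq n]
    (hA : A * Aᴴ * A = A) (v : n → 𝕜) :
    (range A.toEuclideanLin).reflection (toLp 2 v) =
      toLp 2 (((2 : 𝕜) • (A * Aᴴ) - 1) *ᵥ v) := by
  rw [Submodule.reflection_apply, starProjection_range_toEuclideanLin hA, sub_mulVec, smul_mulVec,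
    one_mulVec, toLp_sub, toLp_smul, two_smul ℕ, two_smul 𝕜]

theorem mem_range_toEuclideanLin_iff [DecidableEq m] (hA : A * Aᴴ * A = A) {v : n → 𝕜} :
    toLp 2 v ∈ range A.toEuclideanLin ↔ (A * Aᴴ) *ᵥ v = v := by
  rw [← Submodule.starProjection_eq_self_iff, starProjection_range_toEuclideanLin hA,
    (toLp_injective 2).eq_iff]

theorem stmt10_general [DecidableEq n] [Fintype l] {B : Matrix n l 𝕜}
    (hA : A * Aᴴ * A = A) (hB : B * Bᴴ * B = B) {v : n → 𝕜}
    (hmem : ∃ x y, v = A *ᵥ x + B *ᵥ y)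
    (hfix : (((2 : 𝕜) • (B * Bᴴ) - 1) * ((2 : 𝕜) • (A * Aᴴ) - 1)) *ᵥ v = v) :
    (A * Aᴴ) *ᵥ v = v ∧ (B * Bᴴ) *ᵥ v = v := by
  classical
  have mem_sup : toLp 2 v ∈ range A.toEuclideanLin ⊔ range B.toEuclideanLin := by
    obtain ⟨x, y, rfl⟩ := hmem
    rw [toLp_add]
    exact Submodule.add_mem_sup ⟨toLp 2 x, toLpLin_toLp 2 2 A x⟩ ⟨toLp 2 y, toLpLin_toLp 2 2 B y⟩
  have reflection_fix : (range B.toEuclideanLin).reflection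
      ((range A.toEuclideanLin).reflection (toLp 2 v)) = toLp 2 v := by
    rw [reflection_range_toEuclideanLin hA, reflection_range_toEuclideanLin hB, mulVec_mulVec, hfix]
  obtain ⟨mem_A, mem_B⟩ := mem_inf_of_reflection_reflection_eq_self mem_sup reflection_fix
  exact ⟨(mem_range_toEuclideanLin_iff hA).mp mem_A, (mem_range_toEuclideanLin_iff hB).mp mem_B⟩

end PartialIsometry

/-- Spectral Lemma, part 5: With `A, B` as before
(`AᴴA = BᴴB = I`, `D = AᴴB` Hermitian) and `W = (2BBᴴ − I)(2AAᴴ − I)`,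
if `v` lies in the sum `𝒜 + ℬ` of the column spaces of `A` and `B`
and `Wv = v`, then `v ∈ 𝒜 ∩ ℬ`, i.e. `AAᴴv = v` and `BBᴴv = v`. -/
theorem stmt10 (n m : ℕ) (A B : Matrix (Fin n) (Fin m) ℂ)
    (hA : Aᴴ * A = 1) (hB : Bᴴ * B = 1)
    (hD : (Aᴴ * B).IsHermitian)
    (v : Fin n → ℂ)
    (hmem : ∃ x y : Fin m → ℂ, v = A.mulVec x + B.mulVec y)
    (hfix : (((2 : ℂ) • (B * Bᴴ) - 1) * ((2 : ℂ) • (A * Aᴴ) - 1)).mulVec v = v) :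
    (A * Aᴴ).mulVec v = v ∧ (B * Bᴴ).mulVec v = v := by
  exact stmt10_general (by rw [Matrix.mul_assoc, hA, Matrix.mul_one])
    (by rw [Matrix.mul_assoc, hB, Matrix.mul_one]) hmem hfix
end

section
/- Let d ≥ 1, s ≥ 1, and t ≥ 0 be integers, let U_0, U_1, …, U_t be d×d complex matrices, and let l : [d] → [s] ∪ {⊥} be a function (a partial assignment of a bit-position to each index). For each bit string x ∈ {0,1}^s, let O_x be the d×d diagonal matrix whose k-th diagonal entry is (−1)^{x_{l(k)}} if l(k) ∈ [s] and is 1 if l(k) = ⊥, and let W_x = U_t · O_x · U_{t−1} · O_x ⋯ U_1 · O_x · U_0 (the alternating product with t occurrences of O_x). Then there exist d×d complex matrices M_T, one for each subset T ⊆ [s] with |T| ≤ t, depending only on U_0, …, U_t and l but not on x, such that for every x ∈ {0,1}^s: W_x = Σ_{T ⊆ [s], |T| ≤ t} (−1)^{Σ_{i∈T} x_i} · M_T. -/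
open Matrix

/-- The alternating product `U_t · O · U_{t−1} · O ⋯ U_1 · O · U_0`
with `t` occurrences of the oracle matrix `O`. -/
noncomputable def altProd (d : ℕ) : (t : ℕ) → (Fin (t + 1) → Matrix (Fin d) (Fin d) ℂ) →
    Matrix (Fin d) (Fin d) ℂ → Matrix (Fin d) (Fin d) ℂ
  | 0, U, _ => U 0
  | t + 1, U, O => U (Fin.last (t + 1)) * O * altProd d t (fun i => U i.castSucc) O

/-- The `±`-type bit-probe oracle for a bit string `x : {0,1}^s` together with a
partial assignment `l` of a bit-position to each index: the diagonal matrix whose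
`k`-th diagonal entry is `(−1)^{x_{l(k)}}` if `l k = some i` and `1` if `l k = ⊥`. -/
noncomputable def probeOracle (d s : ℕ) (l : Fin d → Option (Fin s)) (x : Fin s → Bool) :
    Matrix (Fin d) (Fin d) ℂ :=
  Matrix.diagonal (fun k => match l k with
    | some i => if x i then (-1 : ℂ) else 1
    | none => 1)

/-!
For a finite set `T` of positions let `χ_T x = (-1) ^ ∑ i ∈ T, x i`. Since `χ_S * χ_T = χ_{S ∆ T}`
and `|S ∆ T| ≤ |S| + |T|`, the functions of a bit string that are combinations of the `χ_T` with
`|T| ≤ n` (with coefficients in a possibly noncommutative algebra) multiply like polynomials of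
degree at most `n`. The oracle `O_x` has degree at most `1`, because its `k`-th diagonal entry is
`χ_{{i}}` or `χ_∅`, while the `U_j` are constant, so a product with `t` oracle calls has degree at
most `t`.
-/

section ParityDegree

open Finset
open scoped symmDiff

variable {R ι : Type*} [CommRing R]

/-- The parity character (Walsh function) of the set `T` of positions, as an `R`-valued function
of a bit string. -/
def parityChar (R : Type*) [CommRing R] (T : Finset ι) (x : ι → Bool) : R :=
  (-1) ^ ∑ i ∈ T, if x i then 1 else 0

theorem parityChar_empty (x : ι → Bool) : parityChar R ∅ x = 1 := by
  simp [parityChar]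

theorem parityChar_singleton (i : ι) (x : ι → Bool) :
    parityChar R {i} x = if x i then -1 else 1 := by
  cases h : x i <;> simp [parityChar, sum_singleton, h, -sum_boole]

theorem parityChar_mul_parityChar [DecidableEq ι] (S T : Finset ι) (x : ι → Bool) :
    parityChar R S x * parityChar R T x = parityChar R (S ∆ T) x := by
  let b : ι → ℕ := fun i ↦ if x i then 1 else 0
  have hsum : ∑ i ∈ S, b i + ∑ i ∈ T, b i = ∑ i ∈ S ∆ T, b i + 2 * ∑ i ∈ S ∩ T, b i := by
    rw [symmDiff_def, sup_eq_union, sum_union disjoint_sdiff_sdiff,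
      ← sum_inter_add_sum_sdiff S T, ← sum_inter_add_sum_sdiff T S, inter_comm T S]
    ring
  change (-1 : R) ^ (∑ i ∈ S, b i) * (-1) ^ (∑ i ∈ T, b i) = (-1) ^ (∑ i ∈ S ∆ T, b i)
  rw [← pow_add, hsum, pow_add, pow_mul, neg_one_sq, one_pow, mul_one]

theorem card_symmDiff_le [DecidableEq ι] (S T : Finset ι) : #(S ∆ T) ≤ #S + #T :=
  (card_le_card symmDiff_le_sup).trans (card_union_le S T)

section Module

variable {M : Type*} [AddCommMonoid M] [Module R M]

variable (R) in
/-- The linear map sending a coefficient `m` to the monomial `x ↦ parityChar R T x • m`, a function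
of bit strings. -/
def parityMonomial (T : Finset ι) : M →ₗ[R] (ι → Bool) → M :=
  LinearMap.pi fun x ↦ parityChar R T x • LinearMap.id

theorem parityMonomial_apply (T : Finset ι) (m : M) (x : ι → Bool) :
    parityMonomial R T m x = parityChar R T x • m :=
  rfl

variable (R ι M) in
/-- The module-valued functions of a bit string of parity degree at most `n`: the sums of monomials
`parityMonomial T m` with `#T ≤ n`. -/
def parityDegreeLE (n : ℕ) : Submodule R ((ι → Bool) → M) :=
  ⨆ (T : Finset ι) (_ : #T ≤ n), LinearMap.range (parityMonomial R T)

theorem parityMonomial_mem_parityDegreeLE {T : Finset ι} {n : ℕ} (hT : #T ≤ n) (m : M) :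
    parityMonomial R T m ∈ parityDegreeLE R ι M n :=
  Submodule.mem_iSup_of_mem T (Submodule.mem_iSup_of_mem hT (LinearMap.mem_range_self _ m))

theorem const_mem_parityDegreeLE (m : M) (n : ℕ) :
    (fun _ ↦ m) ∈ parityDegreeLE R ι M n := by
  have hconst : (fun _ : ι → Bool ↦ m) = parityMonomial R ∅ m := by
    ext x
    rw [parityMonomial_apply, parityChar_empty, one_smul]
  rw [hconst]
  exact parityMonomial_mem_parityDegreeLE (card_empty.trans_le n.zero_le) m

theorem mem_parityDegreeLE_iff [Fintype ι] {n : ℕ} {f : (ι → Bool) → M} :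
    f ∈ parityDegreeLE R ι M n ↔
      ∃ m : Finset ι → M, ∀ x, f x = ∑ T with #T ≤ n, parityChar R T x • m T := by
  constructor
  · intro hf
    have hf' : f ∈ ⨆ T ∈ univ.filter fun T : Finset ι ↦ #T ≤ n,
        LinearMap.range (parityMonomial (M := M) R T) := by
      simpa only [mem_filter_univ, parityDegreeLE] using hf
    obtain ⟨g, rfl⟩ := (Submodule.mem_iSup_finset_iff_exists_sum _ _).1 hf'
    choose m hm using fun T ↦ (g T).2
    refine ⟨m, fun x ↦ ?_⟩
    simp only [← hm, Finset.sum_apply, parityMonomial_apply]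
  · rintro ⟨m, hm⟩
    have hf : f = ∑ T with #T ≤ n, parityMonomial R T (m T) := by
      ext x
      simp only [hm, Finset.sum_apply, parityMonomial_apply]
    rw [hf]
    exact sum_mem fun T hT ↦ parityMonomial_mem_parityDegreeLE (mem_filter_univ T |>.1 hT) (m T)

end Module

section Algebra

variable {A : Type*} [Semiring A] [Algebra R A]

theorem parityMonomial_mul_parityMonomial [DecidableEq ι] (S T : Finset ι) (a b : A) :
    parityMonomial R S a * parityMonomial R T b = parityMonomial R (S ∆ T) (a * b) := by
  ext x
  simp only [Pi.mul_apply, parityMonomial_apply, smul_mul_smul_comm, parityChar_mul_parityChar]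

theorem mul_mem_parityDegreeLE {m n : ℕ} {f g : (ι → Bool) → A}
    (hf : f ∈ parityDegreeLE R ι A m) (hg : g ∈ parityDegreeLE R ι A n) :
    f * g ∈ parityDegreeLE R ι A (m + n) := by
  classical
  suffices h : parityDegreeLE R ι A m * parityDegreeLE R ι A n ≤ parityDegreeLE R ι A (m + n) from
    h (Submodule.mul_mem_mul hf hg)
  simp only [parityDegreeLE, Submodule.iSup_mul, Submodule.mul_iSup, iSup_le_iff]
  intro T hT S hS
  rw [Submodule.mul_le]
  rintro _ ⟨a, rfl⟩ _ ⟨b, rfl⟩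
  rw [parityMonomial_mul_parityMonomial]
  exact parityMonomial_mem_parityDegreeLE ((card_symmDiff_le S T).trans (add_le_add hS hT)) _

end Algebra

theorem diagonal_parityChar_mem_parityDegreeLE {n : Type*} [Finite n] [DecidableEq n]
    {T : n → Finset ι} {m : ℕ} (hT : ∀ k, #(T k) ≤ m) :
    (fun x ↦ diagonal fun k ↦ parityChar R (T k) x) ∈ parityDegreeLE R ι (Matrix n n R) m := by
  cases nonempty_fintype n
  have hsum : (fun x ↦ diagonal fun k ↦ parityChar R (T k) x) =
      ∑ k, parityMonomial R (T k) (single k k (1 : R)) := by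
    ext x : 1
    simp only [Finset.sum_apply, parityMonomial_apply, smul_single, smul_eq_mul, mul_one]
    exact (sum_single_eq_diagonal fun k ↦ parityChar R (T k) x).symm
  rw [hsum]
  exact sum_mem fun k _ ↦ parityMonomial_mem_parityDegreeLE (hT k) _

theorem altProd_mem_parityDegreeLE {d t m : ℕ} (U : Fin (t + 1) → Matrix (Fin d) (Fin d) ℂ)
    {O : (ι → Bool) → Matrix (Fin d) (Fin d) ℂ} (hO : O ∈ parityDegreeLE ℂ ι _ m) :
    (fun x ↦ altProd d t U (O x)) ∈ parityDegreeLE ℂ ι _ (t * m) := by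
  induction t with
  | zero => exact const_mem_parityDegreeLE (U 0) _
  | succ t ih =>
    rw [Nat.succ_mul, Nat.add_comm]
    have hUO := mul_mem_parityDegreeLE (const_mem_parityDegreeLE (U (Fin.last (t + 1))) 0) hO
    rw [Nat.zero_add] at hUO
    exact mul_mem_parityDegreeLE hUO (ih fun i ↦ U i.castSucc)

theorem probeOracle_eq_diagonal_parityChar (d s : ℕ) (l : Fin d → Option (Fin s))
    (x : Fin s → Bool) :
    probeOracle d s l x = diagonal fun k ↦ parityChar ℂ (l k).toFinset x := by
  refine congrArg diagonal (funext fun k ↦ ?_)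
  cases l k with
  | none => exact (parityChar_empty x).symm
  | some i => exact (parityChar_singleton i x).symm

theorem probeOracle_mem_parityDegreeLE_one (d s : ℕ) (l : Fin d → Option (Fin s)) :
    probeOracle d s l ∈ parityDegreeLE ℂ (Fin s) _ 1 := by
  have hcard : ∀ k, #(l k).toFinset ≤ 1 := fun k ↦ by cases l k <;> simp
  rw [funext (probeOracle_eq_diagonal_parityChar d s l)]
  exact diagonal_parityChar_mem_parityDegreeLE hcard

theorem stmt11_general [Fintype ι] {d t m : ℕ} (U : Fin (t + 1) → Matrix (Fin d) (Fin d) ℂ)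
    {O : (ι → Bool) → Matrix (Fin d) (Fin d) ℂ} (hO : O ∈ parityDegreeLE ℂ ι _ m) :
    ∃ M : Finset ι → Matrix (Fin d) (Fin d) ℂ, ∀ x, altProd d t U (O x) =
      ∑ T with #T ≤ t * m, (-1 : ℂ) ^ (∑ i ∈ T, if x i then 1 else 0) • M T :=
  mem_parityDegreeLE_iff.1 (altProd_mem_parityDegreeLE U hO)

end ParityDegree

/-- For any unitaries `U_0, …, U_t` on `ℂ^d` and any partial
assignment `l : [d] → [s] ∪ {⊥}`, there exist matrices `M_T`, one for each
`T ⊆ [s]` with `|T| ≤ t` and independent of `x`, such that for every bit string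
`x ∈ {0,1}^s` the transform `W_x = U_t O_x U_{t−1} O_x ⋯ U_1 O_x U_0` decomposes
as `W_x = Σ_{T ⊆ [s], |T| ≤ t} (−1)^{Σ_{i∈T} x_i} · M_T`. -/
theorem stmt11 (d s t : ℕ) (hd : 1 ≤ d) (hs : 1 ≤ s)
    (U : Fin (t + 1) → Matrix (Fin d) (Fin d) ℂ)
    (l : Fin d → Option (Fin s)) :
    ∃ M : Finset (Fin s) → Matrix (Fin d) (Fin d) ℂ,
      ∀ x : Fin s → Bool,
        altProd d t U (probeOracle d s l x) =
          ∑ T ∈ (Finset.univ : Finset (Finset (Fin s))).filter (fun T => T.card ≤ t),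
            ((-1 : ℂ) ^ (∑ i ∈ T, if x i then 1 else 0) • M T) := by
  simpa only [mul_one] using stmt11_general U (probeOracle_mem_parityDegreeLE_one d s l)
end

section
/- Let d ≥ 1, m ≥ 1, n ≥ 1 be integers. Let A₀ and A₁ be subspaces of ℂ^d that are mutually orthogonal (⟨a,b⟩ = 0 for all a ∈ A₀, b ∈ A₁). Suppose that for each i ∈ [m] we are given a nonzero vector ψ_i ∈ ℂ^d, and for each subset S ⊆ [m] with |S| ≤ n a d×d unitary matrix W_S such that W_S·ψ_i ∈ A₁ whenever i ∈ S, and W_S·ψ_i ∈ A₀ whenever i ∉ S. Then the family of n-th Kronecker powers {W_S^{⊗n} : S ⊆ [m], |S| ≤ n} is linearly independent over ℂ (in the space of matrices indexed by (Fin n → Fin d)). -/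
open Matrix

/-- The `n`-th Kronecker power of a `d×d` matrix, indexed by tuples
`Fin n → Fin d`, with entries `(M^{⊗n})_{i,j} = Π_{k<n} M_{i(k), j(k)}`. -/
noncomputable def kronPow (d n : ℕ) (M : Matrix (Fin d) (Fin d) ℂ) :
    Matrix (Fin n → Fin d) (Fin n → Fin d) ℂ :=
  fun i j => ∏ k : Fin n, M (i k) (j k)

/-!
A product of linear forms `φ₁ ⊗ ⋯ ⊗ φₙ` takes the value `∏ k, φₖ M` at `M^{⊗n}`. Given `T` with at
most `n` elements, let the `φₖ` run through forms `M ↦ gᵢ (M ψᵢ)`, one for each `i ∈ T`, where `gᵢ`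
kills the "No" subspace but not `W_T ψᵢ`; any factors left over are forms not vanishing at `W_T`.
If `i ∈ T \ S`, then `W_S ψᵢ` lies in the "No" subspace, so the product kills `W_S^{⊗n}` unless
`T ⊆ S`, while it does not vanish at `W_T^{⊗n}`. The forms obtained this way are thus triangular
with respect to inclusion.
-/

open Module (Dual)

theorem linearIndependent_of_dual_triangular {ι R V : Type*} [PartialOrder ι] [CommRing R]
    [NoZeroDivisors R] [AddCommGroup V] [Module R V] (v : ι → V) (f : ι → Dual R V)
    (hdiag : ∀ i, f i (v i) ≠ 0) (hle : ∀ i j, f i (v j) ≠ 0 → i ≤ j) :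
    LinearIndependent R v := by
  rw [linearIndependent_iff]
  intro c hc
  by_contra hne
  obtain ⟨i, hi, hmax⟩ := c.support.exists_maximal (Finsupp.support_nonempty_iff.mpr hne)
  have hoff : ∀ j ∈ c.support, j ≠ i → c j * f i (v j) = 0 := fun j hj hji ↦ by
    by_contra hprod
    have hij : i ≤ j := hle i j (right_ne_zero_of_mul hprod)
    exact hji (le_antisymm (hmax hj hij) hij)
  have hcoeff : c i * f i (v i) = 0 := by
    rw [← Finset.sum_eq_single_of_mem i hi hoff]
    simpa [Finsupp.linearCombination_apply, Finsupp.sum] using congrArg (f i) hc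
  exact mul_ne_zero (Finsupp.mem_support_iff.mp hi) (hdiag i) hcoeff

theorem exists_range_subset_range_of_card_le {ι κ β : Type*} [Fintype ι] [Fintype κ]
    [Nonempty β] (p : ι → β) (h : Fintype.card ι ≤ Fintype.card κ) :
    ∃ f : κ → β, Set.range p ⊆ Set.range f := by
  obtain ⟨e⟩ := Function.Embedding.nonempty_of_card_le h
  refine ⟨Function.extend e p fun _ ↦ Classical.arbitrary β, ?_⟩
  rintro _ ⟨i, rfl⟩
  exact ⟨e i, e.injective.extend_apply p _ i⟩

section KroneckerPower

variable {l m : Type*}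

/-- The `n`-th Kronecker power of a possibly rectangular matrix over a commutative monoid; on
complex `d × d` matrices it is definitionally `kronPow`. -/
def kroneckerPow {R : Type*} [CommMonoid R] (n : ℕ) (M : Matrix l m R) :
    Matrix (Fin n → l) (Fin n → m) R :=
  of fun i j ↦ ∏ k, M (i k) (j k)

theorem exists_dual_kroneckerPow_eq_prod [Finite l] [Finite m] {R : Type*} [CommSemiring R]
    {n : ℕ} (φ : Fin n → Dual R (Matrix l m R)) :
    ∃ Φ : Dual R (Matrix (Fin n → l) (Fin n → m) R),
      ∀ M : Matrix l m R, Φ (kroneckerPow n M) = ∏ k, φ k M := by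
  classical
  have := Fintype.ofFinite l
  have := Fintype.ofFinite m
  refine ⟨∑ i, ∑ j, (∏ k, φ k (single (i k) (j k) 1)) • entryLinearMap R R i j, fun M ↦ ?_⟩
  have hφ (k : Fin n) : φ k M = ∑ a, ∑ b, φ k (single a b 1) * M a b := by
    conv_lhs => rw [matrix_eq_sum_single M]
    have hsingle (a : l) (b : m) : single a b (M a b) = M a b • single a b (1 : R) := by simp
    simp only [map_sum, hsingle, map_smul, smul_eq_mul, mul_comm]
  simp only [hφ, Finset.prod_univ_sum, Fintype.piFinset_univ, Finset.prod_mul_distrib,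
    LinearMap.sum_apply, LinearMap.smul_apply, entryLinearMap_apply, kroneckerPow, of_apply,
    smul_eq_mul]

variable [Finite l] [Fintype m]

theorem exists_dual_kroneckerPow_ne_zero {α K : Type*} [Field K] {n : ℕ} {T : Finset α}
    (hT : T.card ≤ n) (A : α → Submodule K (l → K)) (ψ : α → m → K) {M : Matrix l m K}
    (hM : M ≠ 0) (hMA : ∀ i ∈ T, M *ᵥ ψ i ∉ A i) :
    ∃ Φ : Dual K (Matrix (Fin n → l) (Fin n → m) K), Φ (kroneckerPow n M) ≠ 0 ∧
      ∀ N : Matrix l m K, ∀ i ∈ T, N *ᵥ ψ i ∈ A i → Φ (kroneckerPow n N) = 0 := by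
  have hsep (i : T) : ∃ φ : {φ : Dual K (Matrix l m K) // φ M ≠ 0},
      ∀ N : Matrix l m K, N *ᵥ ψ i ∈ A i → φ.1 N = 0 := by
    obtain ⟨g, hgM, hgA⟩ := Submodule.exists_le_ker_of_notMem (hMA i i.2)
    exact ⟨⟨g ∘ₗ (mulVecBilin K K).flip (ψ i), hgM⟩, fun N hN ↦ hgA hN⟩
  choose p hp using hsep
  have : Nonempty {φ : Dual K (Matrix l m K) // φ M ≠ 0} :=
    nonempty_subtype.mpr (Module.Projective.exists_dual_ne_zero K hM)
  obtain ⟨φ, hφ⟩ := exists_range_subset_range_of_card_le (κ := Fin n) p (by simpa using hT)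
  obtain ⟨Φ, hΦ⟩ := exists_dual_kroneckerPow_eq_prod fun k ↦ (φ k).1
  refine ⟨Φ, ?_, fun N i hi hN ↦ ?_⟩
  · rw [hΦ]
    exact Finset.prod_ne_zero_iff.mpr fun k _ ↦ (φ k).2
  · obtain ⟨k, hk⟩ := hφ ⟨⟨i, hi⟩, rfl⟩
    rw [hΦ]
    exact Finset.prod_eq_zero (Finset.mem_univ k) (hk ▸ hp ⟨i, hi⟩ N hN)

theorem stmt12_general {α K : Type*} [Field K] {n : ℕ} (A : α → Submodule K (l → K))
    (ψ : α → m → K) (W : Finset α → Matrix l m K) (hne : W ∅ ≠ 0)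
    (hyes : ∀ S : Finset α, S.card ≤ n → ∀ i ∈ S, W S *ᵥ ψ i ∉ A i)
    (hno : ∀ S : Finset α, S.card ≤ n → ∀ i ∉ S, W S *ᵥ ψ i ∈ A i) :
    LinearIndependent K
      (fun S : {S : Finset α // S.card ≤ n} ↦ kroneckerPow n (W S.val)) := by
  have hW (T : Finset α) (hT : T.card ≤ n) : W T ≠ 0 := by
    obtain rfl | ⟨i, hi⟩ := T.eq_empty_or_nonempty
    · exact hne
    · intro h
      exact hyes T hT i hi (by simp [h])
  choose Φ hΦ hΦ_zero using fun T : {T : Finset α // T.card ≤ n} ↦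
    exists_dual_kroneckerPow_ne_zero T.2 A ψ (hW T T.2) (hyes T T.2)
  refine linearIndependent_of_dual_triangular _ Φ hΦ fun T S hTS i hiT ↦ ?_
  by_contra hiS
  exact hTS (hΦ_zero T (W S) i hiT (hno S S.2 i hiS))

end KroneckerPower

open scoped ComplexOrder in
theorem mulVec_notMem_of_orthogonal {𝕜 l m : Type*} [RCLike 𝕜] [Fintype l] [Fintype m]
    [DecidableEq m] {A₀ A₁ : Submodule 𝕜 (l → 𝕜)} (horth : ∀ a ∈ A₀, ∀ b ∈ A₁, star a ⬝ᵥ b = 0)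
    {U : Matrix l m 𝕜} {V : Matrix m l 𝕜} (hVU : V * U = 1) {v : m → 𝕜} (hv : v ≠ 0)
    (hmem : U *ᵥ v ∈ A₁) :
    U *ᵥ v ∉ A₀ := by
  intro hmem₀
  have hzero : U *ᵥ v = 0 := dotProduct_star_self_eq_zero.mp (horth _ hmem₀ _ hmem)
  exact hv (by simpa [hVU] using congrArg (V *ᵥ ·) hzero)

/-- Let `A₀, A₁` be mutually orthogonal subspaces of `ℂ^d`
(with respect to the standard inner product `⟨a,b⟩ = Σ_k conj(a k) · b k`),
`ψ_i` nonzero vectors for `i ∈ [m]`, and for each `S ⊆ [m]` with `|S| ≤ n`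
a unitary `W_S` such that `W_S ψ_i ∈ A₁` for `i ∈ S` and `W_S ψ_i ∈ A₀` for
`i ∉ S`.  Then the family `{W_S^{⊗n} : S ⊆ [m], |S| ≤ n}` of `n`-th Kronecker
powers is linearly independent over `ℂ`. -/
theorem stmt12 (d m n : ℕ) (hd : 1 ≤ d) (hm : 1 ≤ m) (hn : 1 ≤ n)
    (A₀ A₁ : Submodule ℂ (Fin d → ℂ))
    (horth : ∀ a ∈ A₀, ∀ b ∈ A₁, ∑ k, (starRingEnd ℂ) (a k) * b k = 0)
    (ψ : Fin m → (Fin d → ℂ)) (hψ : ∀ i, ψ i ≠ 0)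
    (W : Finset (Fin m) → Matrix (Fin d) (Fin d) ℂ)
    (hunit : ∀ S : Finset (Fin m), S.card ≤ n → (W S)ᴴ * W S = 1)
    (hyes : ∀ S : Finset (Fin m), S.card ≤ n → ∀ i ∈ S, (W S).mulVec (ψ i) ∈ A₁)
    (hno : ∀ S : Finset (Fin m), S.card ≤ n → ∀ i ∉ S, (W S).mulVec (ψ i) ∈ A₀) :
    LinearIndependent ℂ
      (fun S : {S : Finset (Fin m) // S.card ≤ n} => kronPow d n (W S.val)) := by
  have : NeZero d := ⟨Nat.one_le_iff_ne_zero.mp hd⟩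
  exact stmt12_general (fun _ ↦ A₀) ψ W (right_ne_zero_of_mul_eq_one (hunit ∅ (by simp)))
    (fun S hS i hi ↦ mulVec_notMem_of_orthogonal horth (hunit S hS) (hψ i) (hyes S hS i hi)) hno
end

section
/- Let V be a real inner product space, let g and b be orthonormal vectors in V, and let θ be a real number. Define u = sin(θ)·g + cos(θ)·b, and define the maps T : V → V by T(x) = x − 2·⟨g,x⟩·g (the reflection negating the g-component) and R : V → V by R(x) = 2·⟨u,x⟩·u − x (the reflection through the line spanned by u). Then for every natural number k, applying the composition R ∘ T exactly k times to u yields (R ∘ T)^k(u) = sin((2k+1)θ)·g + cos((2k+1)θ)·b. -/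
open scoped RealInnerProductSpace

/-!
In the plane spanned by `g` and `b`, measure angles from `b` towards `g`. The reflection through
the line at angle `β` acts on angles by `α ↦ 2β - α`, so `R` acts by `α ↦ 2θ - α`, while `T`, which
negates the `g`-component, acts by `α ↦ -α`. Hence `R ∘ T` adds `2θ` to the angle, and `k` steps
starting from the angle `θ` of `u` lead to the angle `(2k + 1)θ`.
-/

section AngleVector

variable {E : Type*} [AddCommGroup E] [Module ℝ E]

/-- The vector at angle `α` in the plane spanned by `g` and `b`. Angles are measured from `b`
towards `g`, so that the `g`-coordinate (the amplitude of the good states) is the sine. -/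
noncomputable def angleVector (g b : E) (α : ℝ) : E :=
  Real.sin α • g + Real.cos α • b

theorem angleVector_pi_div_two (g b : E) : angleVector g b (Real.pi / 2) = g := by
  simp [angleVector]

theorem angleVector_pi_sub (g b : E) (α : ℝ) :
    angleVector g b (Real.pi - α) = -angleVector g b (-α) := by
  simp only [angleVector, Real.sin_pi_sub, Real.cos_pi_sub, Real.sin_neg, Real.cos_neg]
  module

theorem angleVector_add_add_angleVector_sub (g b : E) (β δ : ℝ) :
    angleVector g b (β + δ) + angleVector g b (β - δ) = (2 * Real.cos δ) • angleVector g b β := by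
  simp only [angleVector, Real.sin_add, Real.cos_add, Real.sin_sub, Real.cos_sub]
  module

end AngleVector

section Reflection

variable {𝕜 E : Type*} [RCLike 𝕜] [NormedAddCommGroup E] [InnerProductSpace 𝕜 E] {u : E}

theorem reflection_span_singleton_of_norm_eq_one (hu : ‖u‖ = 1) (x : E) :
    (𝕜 ∙ u).reflection x = (2 * inner 𝕜 u x) • u - x := by
  rw [Submodule.reflection_singleton_apply, hu]
  simp only [RCLike.ofReal_one, one_pow, div_one]
  module

theorem reflection_orthogonal_span_singleton_of_norm_eq_one (hu : ‖u‖ = 1) (x : E) :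
    (𝕜 ∙ u)ᗮ.reflection x = x - (2 * inner 𝕜 u x) • u := by
  rw [Submodule.reflection_orthogonal_apply, reflection_span_singleton_of_norm_eq_one hu, neg_sub]

end Reflection

section Grover

variable {V : Type*} [NormedAddCommGroup V] [InnerProductSpace ℝ V] {g b : V}

theorem inner_angleVector_angleVector (hg : ‖g‖ = 1) (hb : ‖b‖ = 1) (hgb : ⟪g, b⟫ = 0)
    (α β : ℝ) : ⟪angleVector g b α, angleVector g b β⟫ = Real.cos (α - β) := by
  have hbg : ⟪b, g⟫ = 0 := inner_eq_zero_symm.mp hgb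
  simp only [angleVector, inner_add_left, inner_add_right, real_inner_smul_left,
    real_inner_smul_right, inner_self_eq_one_of_norm_eq_one hg,
    inner_self_eq_one_of_norm_eq_one hb, hgb, hbg, Real.cos_sub]
  ring

theorem norm_angleVector (hg : ‖g‖ = 1) (hb : ‖b‖ = 1) (hgb : ⟪g, b⟫ = 0) (α : ℝ) :
    ‖angleVector g b α‖ = 1 := by
  rw [norm_eq_sqrt_real_inner, inner_angleVector_angleVector hg hb hgb, sub_self, Real.cos_zero,
    Real.sqrt_one]

theorem reflection_angleVector (hg : ‖g‖ = 1) (hb : ‖b‖ = 1) (hgb : ⟪g, b⟫ = 0) (β α : ℝ) :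
    (ℝ ∙ angleVector g b β).reflection (angleVector g b α) = angleVector g b (2 * β - α) := by
  rw [reflection_span_singleton_of_norm_eq_one (norm_angleVector hg hb hgb β),
    inner_angleVector_angleVector hg hb hgb, ← angleVector_add_add_angleVector_sub,
    sub_sub_cancel, add_sub_cancel_right]
  congr 1
  ring

theorem reflection_orthogonal_span_left_angleVector (hg : ‖g‖ = 1) (hb : ‖b‖ = 1)
    (hgb : ⟪g, b⟫ = 0) (α : ℝ) :
    (ℝ ∙ g)ᗮ.reflection (angleVector g b α) = angleVector g b (-α) := by
  have h : (ℝ ∙ g).reflection (angleVector g b α) = -angleVector g b (-α) := by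
    simpa only [angleVector_pi_div_two, mul_div_cancel₀ Real.pi two_ne_zero, angleVector_pi_sub]
      using reflection_angleVector hg hb hgb (Real.pi / 2) α
  rw [Submodule.reflection_orthogonal_apply, h, neg_neg]

theorem semiconj_angleVector_reflection_comp_reflection (hg : ‖g‖ = 1) (hb : ‖b‖ = 1)
    (hgb : ⟪g, b⟫ = 0) (β : ℝ) :
    Function.Semiconj (angleVector g b) (· + 2 * β)
      ((ℝ ∙ angleVector g b β).reflection ∘ (ℝ ∙ g)ᗮ.reflection) := fun α ↦ by
  rw [Function.comp_apply, reflection_orthogonal_span_left_angleVector hg hb hgb,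
    reflection_angleVector hg hb hgb, sub_neg_eq_add, add_comm]

theorem iterate_reflection_comp_reflection_angleVector (hg : ‖g‖ = 1) (hb : ‖b‖ = 1)
    (hgb : ⟪g, b⟫ = 0) (β α : ℝ) (k : ℕ) :
    ((ℝ ∙ angleVector g b β).reflection ∘ (ℝ ∙ g)ᗮ.reflection)^[k] (angleVector g b α) =
      angleVector g b (α + k * (2 * β)) := by
  have h := (semiconj_angleVector_reflection_comp_reflection hg hb hgb β).iterate_right k α
  rw [← h, add_right_iterate_apply, nsmul_eq_mul]

end Grover

/-- Grover iteration: Let `g, b` be orthonormal vectors in a real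
inner product space, `θ : ℝ`, `u = sin θ • g + cos θ • b`, let `T` be the
reflection negating the `g`-component (`T x = x − 2⟨g,x⟩g`, the oracle) and `R`
the reflection through the line spanned by `u` (`R x = 2⟨u,x⟩u − x`).  Then for
every `k`, applying `R ∘ T` exactly `k` times to `u` gives
`sin((2k+1)θ) • g + cos((2k+1)θ) • b`. -/
theorem stmt16 (V : Type*) [NormedAddCommGroup V] [InnerProductSpace ℝ V]
    (g b : V) (hg : ⟪g, g⟫ = 1) (hb : ⟪b, b⟫ = 1) (hgb : ⟪g, b⟫ = 0)
    (θ : ℝ) (u : V) (hu : u = Real.sin θ • g + Real.cos θ • b)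
    (T R : V → V)
    (hT : ∀ x, T x = x - (2 * ⟪g, x⟫) • g)
    (hR : ∀ x, R x = (2 * ⟪u, x⟫) • u - x) :
    ∀ k : ℕ, (R ∘ T)^[k] u =
      Real.sin ((2 * k + 1) * θ) • g + Real.cos ((2 * k + 1) * θ) • b := by
  intro k
  have hg_norm : ‖g‖ = 1 := by rw [norm_eq_sqrt_real_inner, hg, Real.sqrt_one]
  have hb_norm : ‖b‖ = 1 := by rw [norm_eq_sqrt_real_inner, hb, Real.sqrt_one]
  change u = angleVector g b θ at hu
  have hu_norm : ‖u‖ = 1 := hu ▸ norm_angleVector hg_norm hb_norm hgb θ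
  have hT_reflection : T = (ℝ ∙ g)ᗮ.reflection := funext fun x ↦ by
    rw [hT, reflection_orthogonal_span_singleton_of_norm_eq_one hg_norm]
  have hR_reflection : R = (ℝ ∙ u).reflection := funext fun x ↦ by
    rw [hR, reflection_span_singleton_of_norm_eq_one hu_norm]
  calc (R ∘ T)^[k] u = angleVector g b (θ + k * (2 * θ)) := by
        rw [hT_reflection, hR_reflection, hu,
          iterate_reflection_comp_reflection_angleVector hg_norm hb_norm hgb]
    _ = angleVector g b ((2 * k + 1) * θ) := by congr 1; ring
end
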